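/- In H_{k⁺ⁱ}, for every α ≥ 0 the dual generators of H_{₊ᵢk} slide across the inclusion as follows: (a) ψ(x̄(₊ᵢk)_{j,α}) = φ(x̄(k)_{j,α}) for every j ≠ i, i+1; (b) ψ(x̄(₊ᵢk)_{i,α}) = Σ_{f=0}^{α} (−1)^f ξ^f · φ(x̄(k)_{i,α−f}); (c) ψ(x̄(₊ᵢk)_{i+1,α}) = ξ·φ(x̄(k)_{i+1,α−1}) + φ(x̄(k)_{i+1,α}). -/

import Mathlib

/-!
Cohomology rings of `n`-step partial flag varieties, following
Khovanov–Lauda, "A diagrammatic approach to categorification of quantum groups III",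
Section 5 (Iterated flag varieties).
-/

open MvPolynomial Finset TensorProduct

noncomputable section

variable (𝕜 : Type) [Field 𝕜]

/-- The generator `x(k)_{j,α}` of `H_k` (with the conventions `x(k)_{j,0} = 1` and
`x(k)_{j,α} = 0` for `j` or `α` out of range), at the level of the ambient polynomial ring. -/
def xp (n : ℕ) (k : ℕ → ℕ) (j α : ℕ) : MvPolynomial (ℕ × ℕ) 𝕜 :=
  if α = 0 then 1 else if 1 ≤ j ∧ j ≤ n ∧ α ≤ k j - k (j - 1) then X (j, α) else 0

/-- The degree `2d` part of the defining relation of `H_k`: the sum over all tuples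
`(α_1, …, α_n)` with `α_1 + ⋯ + α_n = d` of the products `x(k)_{1,α_1} ⋯ x(k)_{n,α_n}`
(out-of-range tuples contribute `0`). -/
def relPoly (n : ℕ) (k : ℕ → ℕ) (d : ℕ) : MvPolynomial (ℕ × ℕ) 𝕜 :=
  ∑ t ∈ Finset.Nat.antidiagonalTuple n d, ∏ j : Fin n, xp 𝕜 n k ((j : ℕ) + 1) (t j)

/-- The pairs `(j, α)` indexing the actual generators of `H_k`. -/
def InRangeK (n : ℕ) (k : ℕ → ℕ) (j α : ℕ) : Prop :=
  1 ≤ j ∧ j ≤ n ∧ 1 ≤ α ∧ α ≤ k j - k (j - 1)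

/-- The defining ideal of `H_k`: the relations `relPoly` for every `d ≥ 1`, together with
all the irrelevant variables of the ambient polynomial ring. -/
def relIdealK (n : ℕ) (k : ℕ → ℕ) : Ideal (MvPolynomial (ℕ × ℕ) 𝕜) :=
  Ideal.span ({p | ∃ d, 1 ≤ d ∧ p = relPoly 𝕜 n k d} ∪
    {p | ∃ j α : ℕ, ¬ InRangeK n k j α ∧ p = X (j, α)})

/-- The cohomology ring `H_k` of the `n`-step flag variety `Fl(k)`. -/
abbrev HK (n : ℕ) (k : ℕ → ℕ) : Type := MvPolynomial (ℕ × ℕ) 𝕜 ⧸ relIdealK 𝕜 n k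

/-- The generator `x(k)_{j,α} ∈ H_k` (with conventions). -/
def xK (n : ℕ) (k : ℕ → ℕ) (j α : ℕ) : HK 𝕜 n k :=
  Ideal.Quotient.mk (relIdealK 𝕜 n k) (xp 𝕜 n k j α)

open Classical in
/-- The dual generator `x̄(k)_{j,α}`: the sum over all tuples `(α_ℓ)_{ℓ ≠ j}` with
`∑_{ℓ ≠ j} α_ℓ = α` of the products `∏_{ℓ ≠ j} x(k)_{ℓ,α_ℓ}`, at the polynomial level. -/
def xbarp (n : ℕ) (k : ℕ → ℕ) (j α : ℕ) : MvPolynomial (ℕ × ℕ) 𝕜 :=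
  ∑ t ∈ Finset.Nat.antidiagonalTuple n α,
    if ∀ ℓ : Fin n, (ℓ : ℕ) + 1 = j → t ℓ = 0 then
      ∏ ℓ : Fin n, xp 𝕜 n k ((ℓ : ℕ) + 1) (t ℓ)
    else 0

/-- The dual generator `x̄(k)_{j,α} ∈ H_k`. -/
def xbarK (n : ℕ) (k : ℕ → ℕ) (j α : ℕ) : HK 𝕜 n k :=
  Ideal.Quotient.mk (relIdealK 𝕜 n k) (xbarp 𝕜 n k j α)

/-- The dual generator with an integer index, with `x̄(k)_{j,α} = 0` for `α < 0`. -/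
def xbarKZ (n : ℕ) (k : ℕ → ℕ) (j : ℕ) (α : ℤ) : HK 𝕜 n k :=
  if 0 ≤ α then xbarK 𝕜 n k j α.toNat else 0

/-- The sequence `₊ᵢk`, obtained from `k` by replacing `k i` with `k i + 1`. -/
def kup (k : ℕ → ℕ) (i : ℕ) : ℕ → ℕ := fun j => if j = i then k i + 1 else k j

/-- The pairs `(j, α)` indexing the actual generators of `H_{k⁺ⁱ}`:
`ξ` is the variable `(0, 1)`, the `x_{j,α}` (`j ≠ i+1`) are the variables `(j, α)`, and
the `x'_{i+1,α}` are the variables `(i+1, α)`. -/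
def InRangeKi (n : ℕ) (k : ℕ → ℕ) (i j α : ℕ) : Prop :=
  (j = 0 ∧ α = 1) ∨
  (1 ≤ j ∧ j ≤ n ∧ j ≠ i + 1 ∧ 1 ≤ α ∧ α ≤ k j - k (j - 1)) ∨
  (j = i + 1 ∧ 1 ≤ α ∧ α ≤ k (i + 1) - k i - 1)

/-- The generator `x_{j,α}` (for `j ≠ i + 1`) of `H_{k⁺ⁱ}`, with conventions,
at the polynomial level. -/
def yp (n : ℕ) (k : ℕ → ℕ) (i j α : ℕ) : MvPolynomial (ℕ × ℕ) 𝕜 :=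
  if α = 0 then 1
  else if 1 ≤ j ∧ j ≤ n ∧ j ≠ i + 1 ∧ α ≤ k j - k (j - 1) then X (j, α) else 0

/-- The generator `x'_{i+1,α}` of `H_{k⁺ⁱ}`, with conventions, at the polynomial level. -/
def y'p (n : ℕ) (k : ℕ → ℕ) (i α : ℕ) : MvPolynomial (ℕ × ℕ) 𝕜 :=
  if α = 0 then 1 else if α ≤ k (i + 1) - k i - 1 then X (i + 1, α) else 0

/-- The coefficient of `t^α` in the `j`-th factor of the generating series
`(1 + ξt) ⬝ (∑_α x'_{i+1,α} t^α) ⬝ ∏_{j ≠ i+1} (∑_α x_{j,α} t^α)` defining `H_{k⁺ⁱ}`;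
the factor `j = 0` is `1 + ξ t`. -/
def fp (n : ℕ) (k : ℕ → ℕ) (i j α : ℕ) : MvPolynomial (ℕ × ℕ) 𝕜 :=
  if j = 0 then (if α = 0 then 1 else if α = 1 then X (0, 1) else 0)
  else if j = i + 1 then y'p 𝕜 n k i α
  else yp 𝕜 n k i j α

/-- The coefficient of `t^d` in
`(1 + ξt) ⬝ (∑_α x'_{i+1,α} t^α) ⬝ ∏_{j ≠ i+1} (∑_α x_{j,α} t^α)`. -/
def relPolyKi (n : ℕ) (k : ℕ → ℕ) (i d : ℕ) : MvPolynomial (ℕ × ℕ) 𝕜 :=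
  ∑ t ∈ Finset.Nat.antidiagonalTuple (n + 1) d, ∏ j : Fin (n + 1), fp 𝕜 n k i (j : ℕ) (t j)

/-- The defining ideal of `H_{k⁺ⁱ}`. -/
def relIdealKi (n : ℕ) (k : ℕ → ℕ) (i : ℕ) : Ideal (MvPolynomial (ℕ × ℕ) 𝕜) :=
  Ideal.span ({p | ∃ d, 1 ≤ d ∧ p = relPolyKi 𝕜 n k i d} ∪
    {p | ∃ j α : ℕ, ¬ InRangeKi n k i j α ∧ p = X (j, α)})

/-- The cohomology ring `H_{k⁺ⁱ}` of the `(n+1)`-step flag variety `Fl(k⁺ⁱ)`. -/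
abbrev HKi (n : ℕ) (k : ℕ → ℕ) (i : ℕ) : Type := MvPolynomial (ℕ × ℕ) 𝕜 ⧸ relIdealKi 𝕜 n k i

/-- The degree `2` generator `ξ ∈ H_{k⁺ⁱ}`. -/
def xiK (n : ℕ) (k : ℕ → ℕ) (i : ℕ) : HKi 𝕜 n k i :=
  Ideal.Quotient.mk (relIdealKi 𝕜 n k i) (X (0, 1))

/-- The generator `x_{j,α} ∈ H_{k⁺ⁱ}` (for `j ≠ i + 1`), with conventions. -/
def yK (n : ℕ) (k : ℕ → ℕ) (i j α : ℕ) : HKi 𝕜 n k i :=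
  Ideal.Quotient.mk (relIdealKi 𝕜 n k i) (yp 𝕜 n k i j α)

/-- The generator `x'_{i+1,α} ∈ H_{k⁺ⁱ}`, with conventions. -/
def y'K (n : ℕ) (k : ℕ → ℕ) (i α : ℕ) : HKi 𝕜 n k i :=
  Ideal.Quotient.mk (relIdealKi 𝕜 n k i) (y'p 𝕜 n k i α)

/-- `φ : H_k → H_{k⁺ⁱ}` is the algebra homomorphism determined by
`φ(x(k)_{j,α}) = x_{j,α}` for `j ≠ i+1` and
`φ(x(k)_{i+1,α}) = ξ·x'_{i+1,α-1} + x'_{i+1,α}`. -/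
def IsPhi (n : ℕ) (k : ℕ → ℕ) (i : ℕ) (φ : HK 𝕜 n k →ₐ[𝕜] HKi 𝕜 n k i) : Prop :=
  (∀ j α : ℕ, j ≠ i + 1 → φ (xK 𝕜 n k j α) = yK 𝕜 n k i j α) ∧
  (∀ α : ℕ, 1 ≤ α → φ (xK 𝕜 n k (i + 1) α) =
    xiK 𝕜 n k i * y'K 𝕜 n k i (α - 1) + y'K 𝕜 n k i α)

/-- `ψ : H_{₊ᵢk} → H_{k⁺ⁱ}` is the algebra homomorphism determined by
`ψ(x(₊ᵢk)_{j,α}) = x_{j,α}` for `j ≠ i, i+1`, `ψ(x(₊ᵢk)_{i+1,α}) = x'_{i+1,α}`, and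
`ψ(x(₊ᵢk)_{i,α}) = ξ·x_{i,α-1} + x_{i,α}`. -/
def IsPsi (n : ℕ) (k : ℕ → ℕ) (i : ℕ) (ψ : HK 𝕜 n (kup k i) →ₐ[𝕜] HKi 𝕜 n k i) : Prop :=
  (∀ j α : ℕ, j ≠ i → j ≠ i + 1 → ψ (xK 𝕜 n (kup k i) j α) = yK 𝕜 n k i j α) ∧
  (∀ α : ℕ, ψ (xK 𝕜 n (kup k i) (i + 1) α) = y'K 𝕜 n k i α) ∧
  (∀ α : ℕ, 1 ≤ α → ψ (xK 𝕜 n (kup k i) i α) =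
    xiK 𝕜 n k i * yK 𝕜 n k i i (α - 1) + yK 𝕜 n k i i α)

/-- The degree `2d` homogeneous component of a quotient of the polynomial ring, where the
variable `(j, α)` has degree `2α`. -/
def qgrade (I : Ideal (MvPolynomial (ℕ × ℕ) 𝕜)) (d : ℕ) :
    Submodule 𝕜 (MvPolynomial (ℕ × ℕ) 𝕜 ⧸ I) :=
  Submodule.map (Ideal.Quotient.mkₐ 𝕜 I).toLinearMap
    (weightedHomogeneousSubmodule 𝕜 (fun v : ℕ × ℕ => 2 * v.2) d)

end

section Statements

variable (𝕜 : Type) [Field 𝕜]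

/-!
Over `H_{k⁺ⁱ}⟦t⟧`, let `Y_l` be the generating series of the `x_{l,α}` (of the `x'_{i+1,α}` when
`l = i + 1`). The generating series of the dual generators `x̄_{j,α}` is the product over `l ≠ j`
of the generating series of the `x_{l,α}`; `φ` sends these factors to the `Y_l`, except that
`Y_{i+1}` is multiplied by `1 + ξt`, and `ψ` does the same with `Y_i` multiplied instead. Hence
both images are `∏_{l ≠ j} Y_l`, times `1 + ξt` unless `j` is `i + 1` for `φ`, or `i` for `ψ`.
Inverting `1 + ξt` as a geometric series gives the alternating sum.
-/

open scoped PowerSeries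

section PowerSeriesCoefficients

theorem coeff_prod_eq_sum_piAntidiag {R ι : Type*} [CommSemiring R] [DecidableEq ι]
    (f : ι → R⟦X⟧) (d : ℕ) (s : Finset ι) :
    PowerSeries.coeff d (∏ l ∈ s, f l) =
      ∑ t ∈ s.piAntidiag d, ∏ l ∈ s, PowerSeries.coeff (t l) (f l) := by
  rw [PowerSeries.coeff_prod]
  refine sum_bij (fun t _ ↦ ⇑t) (fun t ht ↦ ?_) (fun _ _ _ _ h ↦ DFunLike.coe_injective h)
    (fun t ht ↦ ?_) (fun _ _ ↦ rfl)
  · simpa [subset_iff] using ht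
  · have hsupp := (mem_piAntidiag.mp ht).2
    exact ⟨Finsupp.onFinset s t hsupp, by simpa [subset_iff] using ht, rfl⟩

theorem filter_antidiagonalTuple_eq_piAntidiag {n : ℕ} (s : Finset (Fin n)) (d : ℕ) :
    {t ∈ Finset.Nat.antidiagonalTuple n d | ∀ l ∉ s, t l = 0} = s.piAntidiag d := by
  ext t
  simp only [mem_filter, Finset.Nat.mem_antidiagonalTuple, mem_piAntidiag, ne_eq,
    not_imp_comm (b := _ ∈ s), and_congr_left_iff]
  intro hsupp
  rw [sum_subset (subset_univ s) fun l _ hl ↦ hsupp l hl]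

theorem mk_eq_one_add_C_mul_X_mul_mk {R : Type*} [CommSemiring R] {a : R} {b c : ℕ → R}
    (hzero : b 0 = c 0) (hsucc : ∀ m, b (m + 1) = a * c m + c (m + 1)) :
    PowerSeries.mk b = (1 + PowerSeries.C a * PowerSeries.X) * PowerSeries.mk c := by
  ext m
  cases m with
  | zero => simp [hzero]
  | succ m => simp [add_mul, mul_assoc, PowerSeries.coeff_succ_X_mul, hsucc, add_comm]

theorem mk_neg_pow_mul_one_add_C_mul_X {R : Type*} [CommRing R] (a : R) :
    PowerSeries.mk (fun m ↦ (-a) ^ m) * (1 + PowerSeries.C a * PowerSeries.X) = 1 := by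
  simpa [PowerSeries.rescale_mk, PowerSeries.rescale_X] using
    congrArg (PowerSeries.rescale (-a)) (PowerSeries.mk_one_mul_one_sub_eq_one R)

theorem coeff_eq_sum_neg_pow_mul_coeff_one_add_C_mul_X_mul {R : Type*} [CommRing R] (a : R)
    (p : R⟦X⟧) (d : ℕ) :
    PowerSeries.coeff d p = ∑ f ∈ range (d + 1), (-1) ^ f * a ^ f *
      PowerSeries.coeff (d - f) ((1 + PowerSeries.C a * PowerSeries.X) * p) := by
  conv_lhs => rw [← one_mul p, ← mk_neg_pow_mul_one_add_C_mul_X a, mul_assoc,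
    PowerSeries.coeff_mul, Finset.Nat.sum_antidiagonal_eq_sum_range_succ_mk]
  simp only [PowerSeries.coeff_mk, neg_pow a]

end PowerSeriesCoefficients

theorem prod_ite_eq_mul {ι M : Type*} [DecidableEq ι] [CommMonoid M] (s : Finset ι) (a : ι)
    (u : M) (f : ι → M) :
    ∏ l ∈ s, (if l = a then u else 1) * f l = (if a ∈ s then u else 1) * ∏ l ∈ s, f l := by
  rw [prod_mul_distrib, prod_ite_eq']

theorem prod_fin_succ_ne_eq_prod_Icc_erase {M : Type*} [CommMonoid M] (n j : ℕ) (f : ℕ → M) :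
    ∏ l ∈ {l : Fin n | (l : ℕ) + 1 ≠ j}, f (l + 1) = ∏ l ∈ (Icc 1 n).erase j, f l := by
  rw [← filter_ne', prod_filter, prod_filter,
    Fin.prod_univ_eq_prod_range (fun l ↦ if l + 1 ≠ j then f (l + 1) else 1), range_eq_Ico,
    prod_Ico_add' (fun l ↦ if l ≠ j then f l else 1), zero_add, Ico_add_one_right_eq_Icc]

section GeneratingSeries

variable (n : ℕ) (k : ℕ → ℕ) (i : ℕ)

/-- The generating series `∑_α x(k)_{j,α} t^α` of the generators of `H_k`. -/
noncomputable def xSeries (j : ℕ) : (HK 𝕜 n k)⟦X⟧ := PowerSeries.mk (xK 𝕜 n k j)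

/-- The generating series `∑_α x̄(k)_{j,α} t^α` of the dual generators of `H_k`. -/
noncomputable def xbarSeries (j : ℕ) : (HK 𝕜 n k)⟦X⟧ := PowerSeries.mk (xbarK 𝕜 n k j)

/-- The series `1 + ξt` over `H_{k⁺ⁱ}`, the factor that moves from position `i + 1` to position `i`
when `φ` is replaced with `ψ`. -/
noncomputable def xiSeries : (HKi 𝕜 n k i)⟦X⟧ :=
  1 + PowerSeries.C (xiK 𝕜 n k i) * PowerSeries.X

/-- The generating series over `H_{k⁺ⁱ}` of the generators in position `l ≥ 1`: the
`x_{l,α}` for `l ≠ i + 1`, and the `x'_{i+1,α}` for `l = i + 1`. -/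
noncomputable def ySeries (l : ℕ) : (HKi 𝕜 n k i)⟦X⟧ :=
  PowerSeries.mk (if l = i + 1 then y'K 𝕜 n k i else yK 𝕜 n k i l)

@[simp]
theorem xK_zero (j : ℕ) : xK 𝕜 n k j 0 = 1 := by
  simp [xK, xp]

@[simp]
theorem yK_zero (j : ℕ) : yK 𝕜 n k i j 0 = 1 := by
  simp [yK, yp]

@[simp]
theorem y'K_zero : y'K 𝕜 n k i 0 = 1 := by
  simp [y'K, y'p]

theorem xbarp_eq_sum_piAntidiag (j α : ℕ) :
    xbarp 𝕜 n k j α = ∑ t ∈ piAntidiag {l : Fin n | (l : ℕ) + 1 ≠ j} α,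
      ∏ l ∈ {l : Fin n | (l : ℕ) + 1 ≠ j}, xp 𝕜 n k (l + 1) (t l) := by
  rw [← filter_antidiagonalTuple_eq_piAntidiag, sum_filter]
  refine sum_congr rfl fun t _ ↦ ?_
  simp only [mem_filter_univ, not_not]
  split_ifs with hsupp
  · refine (prod_subset (subset_univ _) fun l _ hl ↦ ?_).symm
    simp only [mem_filter_univ, not_not] at hl
    simp [xp, hsupp l hl]
  · rfl

theorem xbarSeries_eq_prod (j : ℕ) :
    xbarSeries 𝕜 n k j = ∏ l ∈ (Icc 1 n).erase j, xSeries 𝕜 n k l := by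
  ext α
  rw [← prod_fin_succ_ne_eq_prod_Icc_erase, coeff_prod_eq_sum_piAntidiag]
  simp [xbarSeries, xSeries, xbarK, xK, xbarp_eq_sum_piAntidiag]

theorem coeff_X_mul_xbarSeries (j α : ℕ) :
    PowerSeries.coeff α (PowerSeries.X * xbarSeries 𝕜 n k j) = xbarKZ 𝕜 n k j ((α : ℤ) - 1) := by
  cases α with
  | zero => simp [xbarKZ]
  | succ α => simp [xbarKZ, xbarSeries, PowerSeries.coeff_succ_X_mul]

variable {𝕜 n k i}

theorem coeff_map_xbarSeries {R : Type*} [Semiring R] [Algebra 𝕜 R] (F : HK 𝕜 n k →ₐ[𝕜] R)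
    (j α : ℕ) :
    PowerSeries.coeff α (PowerSeries.map (F : _ →+* R) (xbarSeries 𝕜 n k j)) =
      F (xbarK 𝕜 n k j α) := by
  simp [xbarSeries]

theorem IsPhi.map_xSeries {φ : HK 𝕜 n k →ₐ[𝕜] HKi 𝕜 n k i} (hφ : IsPhi 𝕜 n k i φ) (l : ℕ) :
    PowerSeries.map (φ : _ →+* HKi 𝕜 n k i) (xSeries 𝕜 n k l) =
      (if l = i + 1 then xiSeries 𝕜 n k i else 1) * ySeries 𝕜 n k i l := by
  change PowerSeries.mk (fun α ↦ φ (xK 𝕜 n k l α)) = _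
  unfold ySeries
  split_ifs with hl
  · subst hl
    exact mk_eq_one_add_C_mul_X_mul_mk (by simp) fun α ↦ hφ.2 (α + 1) α.succ_pos
  · simp only [hφ.1 l _ hl, one_mul]

theorem IsPsi.map_xSeries {ψ : HK 𝕜 n (kup k i) →ₐ[𝕜] HKi 𝕜 n k i} (hψ : IsPsi 𝕜 n k i ψ)
    (l : ℕ) :
    PowerSeries.map (ψ : _ →+* HKi 𝕜 n k i) (xSeries 𝕜 n (kup k i) l) =
      (if l = i then xiSeries 𝕜 n k i else 1) * ySeries 𝕜 n k i l := by
  change PowerSeries.mk (fun α ↦ ψ (xK 𝕜 n (kup k i) l α)) = _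
  unfold ySeries
  rcases eq_or_ne l i with rfl | hl
  · rw [if_pos rfl, if_neg l.succ_ne_self.symm]
    exact mk_eq_one_add_C_mul_X_mul_mk (by simp) fun α ↦ hψ.2.2 (α + 1) α.succ_pos
  rw [if_neg hl, one_mul]
  split_ifs with hl'
  · subst hl'
    simp only [hψ.2.1]
  · simp only [hψ.1 l _ hl hl']

theorem IsPhi.map_xbarSeries {φ : HK 𝕜 n k →ₐ[𝕜] HKi 𝕜 n k i} (hφ : IsPhi 𝕜 n k i φ) (j : ℕ) :
    PowerSeries.map (φ : _ →+* HKi 𝕜 n k i) (xbarSeries 𝕜 n k j) =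
      (if i + 1 ∈ (Icc 1 n).erase j then xiSeries 𝕜 n k i else 1) *
        ∏ l ∈ (Icc 1 n).erase j, ySeries 𝕜 n k i l := by
  simp only [xbarSeries_eq_prod, map_prod, hφ.map_xSeries, prod_ite_eq_mul]

theorem IsPsi.map_xbarSeries {ψ : HK 𝕜 n (kup k i) →ₐ[𝕜] HKi 𝕜 n k i} (hψ : IsPsi 𝕜 n k i ψ)
    (j : ℕ) :
    PowerSeries.map (ψ : _ →+* HKi 𝕜 n k i) (xbarSeries 𝕜 n (kup k i) j) =
      (if i ∈ (Icc 1 n).erase j then xiSeries 𝕜 n k i else 1) *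
        ∏ l ∈ (Icc 1 n).erase j, ySeries 𝕜 n k i l := by
  simp only [xbarSeries_eq_prod, map_prod, hψ.map_xSeries, prod_ite_eq_mul]

end GeneratingSeries

section Sliding

variable {𝕜} {n i : ℕ} {k : ℕ → ℕ} {φ : HK 𝕜 n k →ₐ[𝕜] HKi 𝕜 n k i}
  {ψ : HK 𝕜 n (kup k i) →ₐ[𝕜] HKi 𝕜 n k i}

theorem map_xbarSeries_kup_of_ne (hi : i ∈ Icc 1 n) (hi' : i + 1 ∈ Icc 1 n)
    (hφ : IsPhi 𝕜 n k i φ) (hψ : IsPsi 𝕜 n k i ψ) {j : ℕ} (hj : j ≠ i) (hj' : j ≠ i + 1) :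
    PowerSeries.map (ψ : _ →+* HKi 𝕜 n k i) (xbarSeries 𝕜 n (kup k i) j) =
      PowerSeries.map (φ : _ →+* HKi 𝕜 n k i) (xbarSeries 𝕜 n k j) := by
  rw [hφ.map_xbarSeries, hψ.map_xbarSeries, if_pos (mem_erase_of_ne_of_mem hj.symm hi),
    if_pos (mem_erase_of_ne_of_mem hj'.symm hi')]

theorem xiSeries_mul_map_xbarSeries_kup_self (hi' : i + 1 ∈ Icc 1 n) (hφ : IsPhi 𝕜 n k i φ)
    (hψ : IsPsi 𝕜 n k i ψ) :
    xiSeries 𝕜 n k i *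
        PowerSeries.map (ψ : _ →+* HKi 𝕜 n k i) (xbarSeries 𝕜 n (kup k i) i) =
      PowerSeries.map (φ : _ →+* HKi 𝕜 n k i) (xbarSeries 𝕜 n k i) := by
  rw [hφ.map_xbarSeries, hψ.map_xbarSeries, if_neg (notMem_erase i _), one_mul,
    if_pos (mem_erase_of_ne_of_mem i.succ_ne_self hi')]

theorem map_xbarSeries_kup_succ (hi : i ∈ Icc 1 n) (hφ : IsPhi 𝕜 n k i φ)
    (hψ : IsPsi 𝕜 n k i ψ) :
    PowerSeries.map (ψ : _ →+* HKi 𝕜 n k i) (xbarSeries 𝕜 n (kup k i) (i + 1)) =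
      xiSeries 𝕜 n k i *
        PowerSeries.map (φ : _ →+* HKi 𝕜 n k i) (xbarSeries 𝕜 n k (i + 1)) := by
  rw [hφ.map_xbarSeries, hψ.map_xbarSeries, if_neg (notMem_erase (i + 1) _), one_mul,
    if_pos (mem_erase_of_ne_of_mem i.succ_ne_self.symm hi)]

theorem coeff_xiSeries_mul_map_xbarSeries (φ : HK 𝕜 n k →ₐ[𝕜] HKi 𝕜 n k i) (j α : ℕ) :
    PowerSeries.coeff α
        (xiSeries 𝕜 n k i * PowerSeries.map (φ : _ →+* HKi 𝕜 n k i) (xbarSeries 𝕜 n k j)) =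
      xiK 𝕜 n k i * φ (xbarKZ 𝕜 n k j ((α : ℤ) - 1)) + φ (xbarK 𝕜 n k j α) := by
  have hshift : PowerSeries.X * PowerSeries.map (φ : _ →+* HKi 𝕜 n k i) (xbarSeries 𝕜 n k j) =
      PowerSeries.map (φ : _ →+* HKi 𝕜 n k i) (PowerSeries.X * xbarSeries 𝕜 n k j) := by
    rw [map_mul, PowerSeries.map_X]
  rw [xiSeries, add_mul, one_mul, mul_assoc, hshift, map_add, PowerSeries.coeff_C_mul,
    coeff_map_xbarSeries, PowerSeries.coeff_map, coeff_X_mul_xbarSeries, add_comm,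
    AlgHom.coe_toRingHom]

end Sliding

theorem stmt6 (n N i : ℕ) (k : ℕ → ℕ)
    (hn : 1 ≤ n) (hk0 : k 0 = 0) (hkN : k n = N) (hmono : ∀ j, j < n → k j ≤ k (j + 1))
    (hi1 : 1 ≤ i) (hin : i + 1 ≤ n) (hik : k i < k (i + 1))
    (φ : HK 𝕜 n k →ₐ[𝕜] HKi 𝕜 n k i) (hφ : IsPhi 𝕜 n k i φ)
    (ψ : HK 𝕜 n (kup k i) →ₐ[𝕜] HKi 𝕜 n k i) (hψ : IsPsi 𝕜 n k i ψ) :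
    (∀ j α : ℕ, 1 ≤ j → j ≤ n → j ≠ i → j ≠ i + 1 →
      ψ (xbarK 𝕜 n (kup k i) j α) = φ (xbarK 𝕜 n k j α)) ∧
    (∀ α : ℕ, ψ (xbarK 𝕜 n (kup k i) i α) =
      ∑ f ∈ Finset.range (α + 1),
        (-1 : HKi 𝕜 n k i) ^ f * xiK 𝕜 n k i ^ f * φ (xbarK 𝕜 n k i (α - f))) ∧
    (∀ α : ℕ, ψ (xbarK 𝕜 n (kup k i) (i + 1) α) =
      xiK 𝕜 n k i * φ (xbarKZ 𝕜 n k (i + 1) ((α : ℤ) - 1)) +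
        φ (xbarK 𝕜 n k (i + 1) α)) := by
  have hi : i ∈ Icc 1 n := mem_Icc.mpr ⟨hi1, by lia⟩
  have hi' : i + 1 ∈ Icc 1 n := mem_Icc.mpr ⟨by lia, hin⟩
  refine ⟨fun j α _ _ hj hj' ↦ ?_, fun α ↦ ?_, fun α ↦ ?_⟩
  · rw [← coeff_map_xbarSeries ψ, map_xbarSeries_kup_of_ne hi hi' hφ hψ hj hj',
      coeff_map_xbarSeries]
  · simp only [← coeff_map_xbarSeries φ, ← xiSeries_mul_map_xbarSeries_kup_self hi' hφ hψ]
    rw [← coeff_map_xbarSeries ψ]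
    exact coeff_eq_sum_neg_pow_mul_coeff_one_add_C_mul_X_mul _ _ α
  · rw [← coeff_map_xbarSeries ψ, map_xbarSeries_kup_succ hi hφ hψ,
      coeff_xiSeries_mul_map_xbarSeries]

end Statements
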